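/- arXiv:2311.17849 — 4 statements merged into one kernel-verified Lean document; each statement's English description precedes it below -/
import Mathlib

section
/- Let G = (V, E) be a finite digraph and R ⊆ V × V. If there exists a path in G satisfying the First-Visits conditions for R, then there exists a path in G of length at most (|V| − 1)² satisfying the First-Visits conditions for R. -/
/-!
Whether a path satisfies the First-Visits conditions depends only on the order in which vertices
are visited for the first time, so a shortest such path ends with a first visit, and each of its
closed subpaths has a first visit strictly inside. Hence the vertices from one first visit up to,
but excluding, the next are pairwise distinct; as they have all been visited before, there are at
most `m` of them if the later first visit is that of the `(m + 1)`-st vertex. Summing over `m < n`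
bounds the length of a shortest path visiting `n` vertices by `n.choose 2 ≤ (n - 1) ^ 2`.
-/

/-- A path of length `k` in the digraph with edge relation `E`, given as the
sequence of vertices `ρ 0, ρ 1, …, ρ k`. -/
def IsPath {V : Type*} (E : V → V → Prop) (k : ℕ) (ρ : ℕ → V) : Prop :=
  ∀ i < k, E (ρ i) (ρ (i + 1))

/-- The path `ρ 0, …, ρ k` satisfies the First-Visits conditions for `R`:
for every `(u, v) ∈ R`, the path visits `u`, and every occurrence of `v`
is preceded by an occurrence of `u`. -/
def FirstVisits {V : Type*} (R : Set (V × V)) (k : ℕ) (ρ : ℕ → V) : Prop :=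
  ∀ p ∈ R, (∃ i ≤ k, ρ i = p.1) ∧ ∀ j ≤ k, ρ j = p.2 → ∃ i < j, ρ i = p.1

section FirstVisit

variable {V : Type*} {ρ : ℕ → V}

/-- The position `t` is the first visit of `ρ` to the vertex `ρ t`. -/
def IsFirstVisit (ρ : ℕ → V) (t : ℕ) : Prop :=
  ∀ s < t, ρ s ≠ ρ t

lemma isFirstVisit_zero (ρ : ℕ → V) : IsFirstVisit ρ 0 :=
  fun _ hs => absurd hs (Nat.not_lt_zero _)

lemma exists_isFirstVisit_le (ρ : ℕ → V) (i : ℕ) : ∃ t ≤ i, ρ t = ρ i ∧ IsFirstVisit ρ t := by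
  classical
  have visited : ∃ t, ρ t = ρ i := ⟨i, rfl⟩
  exact ⟨Nat.find visited, Nat.find_min' visited rfl, Nat.find_spec visited,
    fun s hs h => Nat.find_min visited hs (h.trans (Nat.find_spec visited))⟩

lemma exists_last_isFirstVisit_lt (ρ : ℕ → V) {k : ℕ} (hk : 0 < k) :
    ∃ l < k, IsFirstVisit ρ l ∧ ∀ t ∈ Set.Ioo l k, ¬ IsFirstVisit ρ t := by
  classical
  refine ⟨Nat.findGreatest (IsFirstVisit ρ) (k - 1), ?_,
    Nat.findGreatest_spec (Nat.zero_le _) (isFirstVisit_zero ρ),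
    fun t ht => Nat.findGreatest_is_greatest ht.1 (Nat.le_sub_one_of_lt ht.2)⟩
  exact (Nat.findGreatest_le _).trans_lt (Nat.sub_one_lt_of_lt hk)

lemma FirstVisits.comp_strictMono {R : Set (V × V)} {k m : ℕ} (h : FirstVisits R k ρ)
    {σ : ℕ → ℕ} (hσ : StrictMono σ) (hm : σ m ≤ k)
    (hfirst : ∀ t ≤ k, IsFirstVisit ρ t → ∃ a ≤ m, σ a = t) :
    FirstVisits R m (ρ ∘ σ) := by
  have visit_kept : ∀ i ≤ k, ∃ a ≤ m, σ a ≤ i ∧ ρ (σ a) = ρ i := by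
    intro i hi
    obtain ⟨t, hti, hρ, ht⟩ := exists_isFirstVisit_le ρ i
    obtain ⟨a, ha, rfl⟩ := hfirst t (hti.trans hi) ht
    exact ⟨a, ha, hti, hρ⟩
  refine fun p hp => ⟨?_, fun j hj hjv => ?_⟩
  · obtain ⟨i, hi, hiu⟩ := (h p hp).1
    obtain ⟨a, ha, -, hρ⟩ := visit_kept i hi
    exact ⟨a, ha, hρ.trans hiu⟩
  · have hjk : σ j ≤ k := (hσ.monotone hj).trans hm
    obtain ⟨i, hij, hiu⟩ := (h p hp).2 (σ j) hjk hjv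
    obtain ⟨a, -, hai, hρ⟩ := visit_kept i (hij.le.trans hjk)
    exact ⟨a, hσ.lt_iff_lt.mp (hai.trans_lt hij), hρ.trans hiu⟩

end FirstVisit

section SkipLoop

variable {i d : ℕ}

/-- The reindexing that jumps over the positions `i + 1, …, i + d`: if `ρ i = ρ (i + d)`, then
`ρ ∘ skipLoop i d` is `ρ` with the closed subpath from `i` to `i + d` contracted. -/
def skipLoop (i d t : ℕ) : ℕ :=
  if t ≤ i then t else t + d

lemma skipLoop_of_le {t : ℕ} (h : t ≤ i) : skipLoop i d t = t :=
  if_pos h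

lemma skipLoop_of_lt {t : ℕ} (h : i < t) : skipLoop i d t = t + d :=
  if_neg h.not_ge

lemma skipLoop_strictMono : StrictMono (skipLoop i d) := by
  intro s t hst
  unfold skipLoop
  split_ifs <;> omega

lemma IsPath.comp_skipLoop {V : Type*} {E : V → V → Prop} {k : ℕ} {ρ : ℕ → V}
    (h : IsPath E k ρ) (hloop : ρ i = ρ (i + d)) : IsPath E (k - d) (ρ ∘ skipLoop i d) := by
  intro t ht
  simp only [Function.comp_apply]
  rcases lt_trichotomy t i with hti | rfl | hit
  · rw [skipLoop_of_le hti.le, skipLoop_of_le hti]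
    exact h t (by omega)
  · rw [skipLoop_of_le le_rfl, skipLoop_of_lt t.lt_add_one, hloop, add_right_comm]
    exact h (t + d) (by omega)
  · rw [skipLoop_of_lt hit, skipLoop_of_lt (hit.trans t.lt_add_one), add_right_comm]
    exact h (t + d) (by omega)

lemma FirstVisits.comp_skipLoop {V : Type*} {R : Set (V × V)} {k : ℕ} {ρ : ℕ → V}
    (h : FirstVisits R k ρ) (hk : i + d ≤ k)
    (hfirst : ∀ t ∈ Set.Ioc i (i + d), ¬ IsFirstVisit ρ t) :
    FirstVisits R (k - d) (ρ ∘ skipLoop i d) := by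
  refine h.comp_strictMono skipLoop_strictMono (by unfold skipLoop; split_ifs <;> omega) ?_
  intro t htk ht
  rcases le_or_gt t i with hti | hit
  · exact ⟨t, by omega, skipLoop_of_le hti⟩
  · have hdt : i + d < t := not_le.mp fun htd => hfirst t ⟨hit, htd⟩ ht
    exact ⟨t - d, by omega, by rw [skipLoop_of_lt (by omega)]; omega⟩

end SkipLoop

section IsIrredundant

variable {V : Type*} {k : ℕ} {ρ : ℕ → V}

/-- The sequence `ρ 0, …, ρ k` ends with a first visit, and each of its closed subsequences has a
first visit strictly inside. For a path, this says that neither dropping the last vertex nor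
contracting a closed subpath preserves all first visits. -/
structure IsIrredundant (k : ℕ) (ρ : ℕ → V) : Prop where
  isFirstVisit_last : IsFirstVisit ρ k
  exists_isFirstVisit_of_eq :
    ∀ i j, i < j → j ≤ k → ρ i = ρ j → ∃ t ∈ Set.Ioo i j, IsFirstVisit ρ t

lemma IsIrredundant.of_le {l : ℕ} (h : IsIrredundant k ρ) (hlk : l ≤ k) (hl : IsFirstVisit ρ l) :
    IsIrredundant l ρ :=
  ⟨hl, fun i j hij hjl => h.exists_isFirstVisit_of_eq i j hij (hjl.trans hlk)⟩

lemma IsIrredundant.injOn_Ico {l : ℕ} (h : IsIrredundant k ρ)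
    (hfirst : ∀ t ∈ Set.Ioo l k, ¬ IsFirstVisit ρ t) : Set.InjOn ρ (Set.Ico l k) := by
  have ne_of_lt : ∀ i j, l ≤ i → i < j → j < k → ρ i ≠ ρ j := by
    intro i j hli hij hjk hρ
    obtain ⟨t, ⟨hit, htj⟩, ht⟩ := h.exists_isFirstVisit_of_eq i j hij hjk.le hρ
    exact hfirst t ⟨hli.trans_lt hit, htj.trans hjk⟩ ht
  intro i hi j hj hρ
  rcases lt_trichotomy i j with hij | hij | hji
  · exact absurd hρ (ne_of_lt i j hi.1 hij hj.2)
  · exact hij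
  · exact absurd hρ.symm (ne_of_lt j i hj.1 hji hi.2)

theorem IsIrredundant.le_choose_two {s : Set V} (h : IsIrredundant k ρ) (hs : s.Finite)
    (hρ : Set.MapsTo ρ (Set.Iic k) s) : k ≤ s.ncard.choose 2 := by
  induction k using Nat.strong_induction_on generalizing s with
  | _ k ih =>
    rcases Nat.eq_zero_or_pos k with rfl | hk
    · exact Nat.zero_le _
    obtain ⟨l, hlk, hl, hfirst⟩ := exists_last_isFirstVisit_lt ρ hk
    have maps_before : Set.MapsTo ρ (Set.Iio k) (s \ {ρ k}) :=
      fun t ht => ⟨hρ (Set.Iio_subset_Iic_self ht), h.isFirstVisit_last t ht⟩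
    have length_le : l ≤ (s \ {ρ k}).ncard.choose 2 :=
      ih l hlk (h.of_le hlk.le hl) hs.sdiff fun t ht => maps_before (lt_of_le_of_lt ht hlk)
    have gap_le : k - l ≤ (s \ {ρ k}).ncard := by
      rw [← Set.ncard_Ico_nat]
      exact Set.ncard_le_ncard_of_injOn ρ (fun t ht => maps_before ht.2) (h.injOn_Ico hfirst)
        hs.sdiff
    calc k = (k - l) + l := by omega
      _ ≤ (s \ {ρ k}).ncard + (s \ {ρ k}).ncard.choose 2 := add_le_add gap_le length_le
      _ = ((s \ {ρ k}).ncard + 1).choose 2 := by rw [Nat.choose_succ_succ', Nat.choose_one_right]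
      _ = s.ncard.choose 2 := by
        rw [Set.ncard_sdiff_singleton_add_one (hρ Set.self_mem_Iic) hs]

lemma IsIrredundant.of_shortest {E : V → V → Prop} {R : Set (V × V)}
    (hpath : IsPath E k ρ) (hvisits : FirstVisits R k ρ)
    (hmin : ∀ m ρ', IsPath E m ρ' → FirstVisits R m ρ' → k ≤ m) : IsIrredundant k ρ where
  isFirstVisit_last := by
    by_contra hlast
    have hk : k ≠ 0 := by
      rintro rfl
      exact hlast (isFirstVisit_zero ρ)
    have truncated_path : IsPath E (k - 1) ρ := fun t ht => hpath t (by omega)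
    have truncated_visits : FirstVisits R (k - 1) ρ := by
      refine hvisits.comp_strictMono strictMono_id (Nat.sub_le k 1) fun t htk ht => ⟨t, ?_, rfl⟩
      exact Nat.le_sub_one_of_lt (htk.lt_of_ne fun htk' => hlast (htk' ▸ ht))
    have := hmin _ _ truncated_path truncated_visits
    omega
  exists_isFirstVisit_of_eq i j hij hjk hρ := by
    obtain ⟨d, rfl⟩ := Nat.exists_eq_add_of_le hij.le
    by_contra! hfirst
    have no_first_visit : ∀ t ∈ Set.Ioc i (i + d), ¬ IsFirstVisit ρ t := by
      rintro t ⟨hit, htd⟩ ht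
      rcases htd.eq_or_lt with rfl | htd
      · exact ht i hij hρ
      · exact hfirst t ⟨hit, htd⟩ ht
    have := hmin _ _ (hpath.comp_skipLoop hρ) (hvisits.comp_skipLoop hjk no_first_visit)
    omega

end IsIrredundant

lemma choose_two_le_sub_one_sq (n : ℕ) : n.choose 2 ≤ (n - 1) ^ 2 := by
  cases n with
  | zero => simp
  | succ m =>
    rw [Nat.choose_two_right, Nat.add_sub_cancel]
    exact Nat.div_le_of_le_mul (by nlinarith [Nat.le_self_pow two_ne_zero m])

theorem firstVisits_short_path_general {V : Type*} (E : V → V → Prop) (R : Set (V × V))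
    (h : ∃ (k : ℕ) (ρ : ℕ → V), IsPath E k ρ ∧ FirstVisits R k ρ) :
    ∃ (k : ℕ) (ρ : ℕ → V), k ≤ (ρ '' Set.Iic k).ncard.choose 2 ∧
      IsPath E k ρ ∧ FirstVisits R k ρ := by
  classical
  obtain ⟨ρ, hpath, hvisits⟩ := Nat.find_spec h
  have irredundant : IsIrredundant (Nat.find h) ρ :=
    .of_shortest hpath hvisits fun _ ρ' hpath' hvisits' => Nat.find_min' h ⟨ρ', hpath', hvisits'⟩
  exact ⟨Nat.find h, ρ, irredundant.le_choose_two (Set.toFinite _) (Set.mapsTo_image ρ _),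
    hpath, hvisits⟩

theorem firstVisits_short_path {V : Type*} [Fintype V] (E : V → V → Prop)
    (R : Set (V × V))
    (h : ∃ (k : ℕ) (ρ : ℕ → V), IsPath E k ρ ∧ FirstVisits R k ρ) :
    ∃ (k : ℕ) (ρ : ℕ → V), k ≤ (Fintype.card V - 1) ^ 2 ∧
      IsPath E k ρ ∧ FirstVisits R k ρ := by
  obtain ⟨k, ρ, hk, hρ⟩ := firstVisits_short_path_general E R h
  have visited_le : (ρ '' Set.Iic k).ncard ≤ Fintype.card V :=
    (Set.ncard_le_card _).trans_eq Nat.card_eq_fintype_card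
  exact ⟨k, ρ, (hk.trans (Nat.choose_le_choose 2 visited_le)).trans
    (choose_two_le_sub_one_sq _), hρ⟩
end

section
/- Let G = (V, E) be a finite digraph and R ⊆ V × V. If there exists a path in G satisfying the Last-Visits conditions for R, then there exists a path in G of length at most (|V| − 1)² satisfying the Last-Visits conditions for R. -/
/-- The path `ρ 0, …, ρ k` satisfies the Last-Visits conditions for `R`:
for every `(v, u) ∈ R`, the path visits `u`, and every occurrence of `v`
is followed by a strictly later occurrence of `u`. -/
def LastVisits {V : Type*} (R : Set (V × V)) (k : ℕ) (ρ : ℕ → V) : Prop :=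
  ∀ p ∈ R, (∃ j ≤ k, ρ j = p.2) ∧ ∀ i ≤ k, ρ i = p.1 → ∃ j ≤ k, i < j ∧ ρ j = p.2

/-!
Deleting positions from a path preserves the Last-Visits conditions as long as the last visit to
every vertex survives. Hence in a shortest path the initial vertex is never revisited, and any two
visits to the same vertex are separated by the last visit to some vertex. The step from position
`i` to `i + 1` is therefore determined by the pair of the vertex whose last visit is the most recent
one at `i` and the vertex at `i + 1`. The former is never the final vertex and the latter is never
the initial one.
-/

section

variable {V : Type*} {E : V → V → Prop} {R : Set (V × V)} {k : ℕ} {ρ : ℕ → V}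

/-- Position `p` is the last visit of the path `ρ 0, …, ρ k` to the vertex `ρ p`. -/
def IsLastVisit (k : ℕ) (ρ : ℕ → V) (p : ℕ) : Prop :=
  IsGreatest {i | i ≤ k ∧ ρ i = ρ p} p

theorem IsLastVisit.eq_of_apply_eq {p q : ℕ} (hp : IsLastVisit k ρ p) (hq : IsLastVisit k ρ q)
    (h : ρ p = ρ q) : p = q :=
  le_antisymm (hq.2 ⟨hp.1.1, h⟩) (hp.2 ⟨hq.1.1, h.symm⟩)

theorem exists_isLastVisit_ge {i : ℕ} (hi : i ≤ k) :
    ∃ p, i ≤ p ∧ IsLastVisit k ρ p ∧ ρ p = ρ i := by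
  have hbdd : BddAbove {j | j ≤ k ∧ ρ j = ρ i} := ⟨k, fun _ hj => hj.1⟩
  obtain ⟨p, hp⟩ := hbdd.exists_isGreatest_of_nonempty ⟨i, hi, rfl⟩
  have hpi : ρ p = ρ i := hp.1.2
  exact ⟨p, hp.2 ⟨hi, rfl⟩, by rwa [IsLastVisit, hpi], hpi⟩

theorem LastVisits.comp {m : ℕ} {e : ℕ → ℕ} (h : LastVisits R k ρ)
    (hmono : MonotoneOn e (Set.Iic m)) (hmaps : Set.MapsTo e (Set.Iic m) (Set.Iic k))
    (hlast : ∀ p, IsLastVisit k ρ p → p ∈ e '' Set.Iic m) :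
    LastVisits R m (ρ ∘ e) := by
  have later_visit : ∀ j ≤ k, ∃ i ≤ m, j ≤ e i ∧ ρ (e i) = ρ j := by
    intro j hj
    obtain ⟨p, hjp, hp, hpj⟩ := exists_isLastVisit_ge (ρ := ρ) hj
    obtain ⟨i, hi, rfl⟩ := hlast p hp
    exact ⟨i, hi, hjp, hpj⟩
  intro p hp
  obtain ⟨⟨j, hj, hju⟩, hnext⟩ := h p hp
  constructor
  · obtain ⟨i, hi, -, hij⟩ := later_visit j hj
    exact ⟨i, hi, hij.trans hju⟩
  · intro i hi hiv
    obtain ⟨j, hj, hij, hju⟩ := hnext (e i) (hmaps hi) hiv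
    obtain ⟨l, hl, hjl, hlj⟩ := later_visit j hj
    exact ⟨l, hl, hmono.reflect_lt hi hl (hij.trans_le hjl), hlj.trans hju⟩

/-- The increasing enumeration of `ℕ` without the block `a, …, a + d - 1`; composing a path with it
cuts out these positions. -/
def skipBlock (a d i : ℕ) : ℕ :=
  if i < a then i else i + d

theorem skipBlock_of_lt {a i : ℕ} (d : ℕ) (h : i < a) : skipBlock a d i = i :=
  if_pos h

theorem skipBlock_of_le {a i : ℕ} (d : ℕ) (h : a ≤ i) : skipBlock a d i = i + d :=
  if_neg h.not_gt

theorem skipBlock_le_add (a d i : ℕ) : skipBlock a d i ≤ i + d := by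
  grind [skipBlock]

theorem monotone_skipBlock (a d : ℕ) : Monotone (skipBlock a d) := by
  intro i j hij
  grind [skipBlock]

theorem mem_skipBlock_image_Iic {a d m p : ℕ} (ham : a ≤ m) (hp : p ≤ m + d)
    (hblock : p ∉ Set.Ico a (a + d)) : p ∈ skipBlock a d '' Set.Iic m := by
  rcases lt_or_ge p a with hpa | hap
  · exact ⟨p, (hpa.trans_le ham).le, skipBlock_of_lt d hpa⟩
  · have hadp : a + d ≤ p := not_lt.mp fun h => hblock ⟨hap, h⟩
    refine ⟨p - d, Nat.sub_le_of_le_add hp, ?_⟩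
    rw [skipBlock_of_le d (Nat.le_sub_of_add_le hadp), Nat.sub_add_cancel (by omega)]

/-- For `a = 0` the cut removes an initial segment, so there is nothing to rejoin. -/
theorem IsPath.comp_skipBlock {a d m : ℕ} (h : IsPath E (m + d) ρ)
    (hjoin : a = 0 ∨ ρ a = ρ (a + d)) : IsPath E m (ρ ∘ skipBlock a d) := by
  intro i hi
  simp only [Function.comp_apply]
  rcases lt_trichotomy (i + 1) a with hia | rfl | hai
  · rw [skipBlock_of_lt d hia, skipBlock_of_lt d (Nat.lt_of_succ_lt hia)]
    exact h i (by omega)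
  · rw [skipBlock_of_lt d i.lt_succ_self, skipBlock_of_le d le_rfl,
      ← hjoin.resolve_left i.succ_ne_zero]
    exact h i (by omega)
  · rw [skipBlock_of_le d (Nat.le_of_lt_succ hai), skipBlock_of_le d hai.le, Nat.add_right_comm]
    exact h (i + d) (by omega)

theorem LastVisits.comp_skipBlock {a d m : ℕ} (h : LastVisits R (m + d) ρ) (ham : a ≤ m)
    (hblock : ∀ p ∈ Set.Ico a (a + d), ¬ IsLastVisit (m + d) ρ p) :
    LastVisits R m (ρ ∘ skipBlock a d) :=
  h.comp ((monotone_skipBlock a d).monotoneOn _)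
    (fun i hi => (skipBlock_le_add a d i).trans (Nat.add_le_add_right hi d))
    fun p hp => mem_skipBlock_image_Iic ham hp.1.1 fun hpb => hblock p hpb hp

/-- The path `ρ 0, …, ρ k` has minimal length among the paths satisfying the Last-Visits
conditions for `R`. -/
structure IsShortestLastVisits (E : V → V → Prop) (R : Set (V × V)) (k : ℕ) (ρ : ℕ → V) :
    Prop where
  isPath : IsPath E k ρ
  lastVisits : LastVisits R k ρ
  le_length : ∀ ⦃m : ℕ⦄ ⦃σ : ℕ → V⦄, IsPath E m σ → LastVisits R m σ → k ≤ m

theorem exists_isShortestLastVisits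
    (h : ∃ (k : ℕ) (ρ : ℕ → V), IsPath E k ρ ∧ LastVisits R k ρ) :
    ∃ (k : ℕ) (ρ : ℕ → V), IsShortestLastVisits E R k ρ := by
  classical
  obtain ⟨ρ, hpath, hvisits⟩ := Nat.find_spec h
  exact ⟨Nat.find h, ρ, hpath, hvisits, fun _ σ hσ hσR => Nat.find_min' h ⟨σ, hσ, hσR⟩⟩

/-- The position of the most recent last visit at position `i`, or `0` if there is none. -/
noncomputable def recentLastVisit (k : ℕ) (ρ : ℕ → V) (i : ℕ) : ℕ :=
  open scoped Classical in Nat.findGreatest (IsLastVisit k ρ) i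

theorem recentLastVisit_le (k : ℕ) (ρ : ℕ → V) (i : ℕ) : recentLastVisit k ρ i ≤ i := by
  classical exact Nat.findGreatest_le i

theorem IsLastVisit.le_recentLastVisit {p i : ℕ} (hp : IsLastVisit k ρ p) (hpi : p ≤ i) :
    p ≤ recentLastVisit k ρ i := by
  classical exact Nat.le_findGreatest hpi hp

theorem isLastVisit_recentLastVisit (h0 : IsLastVisit k ρ 0) (i : ℕ) :
    IsLastVisit k ρ (recentLastVisit k ρ i) := by
  classical exact Nat.findGreatest_spec (P := IsLastVisit k ρ) i.zero_le h0

namespace IsShortestLastVisits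

theorem exists_isLastVisit_mem_Ico (h : IsShortestLastVisits E R k ρ) {a b : ℕ} (hab : a < b)
    (hbk : b ≤ k) (hjoin : a = 0 ∨ ρ a = ρ b) : ∃ p ∈ Set.Ico a b, IsLastVisit k ρ p := by
  by_contra! hblock
  obtain ⟨d, rfl⟩ := Nat.exists_eq_add_of_le hab.le
  obtain ⟨m, rfl⟩ := Nat.exists_eq_add_of_le' (show d ≤ k by omega)
  have hshorter : m + d ≤ m :=
    h.le_length (h.isPath.comp_skipBlock hjoin)
      (h.lastVisits.comp_skipBlock (by omega) hblock)
  omega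

theorem isLastVisit_zero (h : IsShortestLastVisits E R k ρ) : IsLastVisit k ρ 0 := by
  rcases k.eq_zero_or_pos with rfl | hk
  · exact ⟨⟨le_rfl, rfl⟩, fun _ hi => hi.1⟩
  · obtain ⟨p, hp, hlast⟩ := h.exists_isLastVisit_mem_Ico one_pos hk (.inl rfl)
    rwa [Nat.lt_one_iff.mp hp.2] at hlast

theorem apply_recentLastVisit_ne (h : IsShortestLastVisits E R k ρ) {i j : ℕ} (hij : i < j)
    (hjk : j < k) (hnext : ρ (i + 1) = ρ (j + 1)) :
    ρ (recentLastVisit k ρ i) ≠ ρ (recentLastVisit k ρ j) := by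
  intro heq
  obtain ⟨p, ⟨hip, hpj⟩, hp⟩ :=
    h.exists_isLastVisit_mem_Ico (Nat.succ_lt_succ hij) hjk (.inr hnext)
  have hlt : recentLastVisit k ρ i < recentLastVisit k ρ j :=
    calc
      recentLastVisit k ρ i ≤ i := recentLastVisit_le k ρ i
      _ < p := hip
      _ ≤ recentLastVisit k ρ j := hp.le_recentLastVisit (Nat.le_of_lt_succ hpj)
  have h0 := h.isLastVisit_zero
  exact hlt.ne <| (isLastVisit_recentLastVisit h0 i).eq_of_apply_eq
    (isLastVisit_recentLastVisit h0 j) heq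

theorem injOn_recentLastVisit_next (h : IsShortestLastVisits E R k ρ) :
    Set.InjOn (fun i => (ρ (recentLastVisit k ρ i), ρ (i + 1))) (Set.Iio k) := by
  intro i hi j hj hij
  obtain ⟨hrecent, hnext⟩ := Prod.mk.inj hij
  rcases lt_trichotomy i j with hlt | heq | hgt
  · exact absurd hrecent (h.apply_recentLastVisit_ne hlt hj hnext)
  · exact heq
  · exact absurd hrecent.symm (h.apply_recentLastVisit_ne hgt hi hnext.symm)

theorem mapsTo_recentLastVisit_next (h : IsShortestLastVisits E R k ρ) :
    Set.MapsTo (fun i => (ρ (recentLastVisit k ρ i), ρ (i + 1))) (Set.Iio k)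
      ((ρ '' Set.Iic k \ {ρ k}) ×ˢ (ρ '' Set.Iic k \ {ρ 0})) := by
  intro i (hi : i < k)
  have h0 := h.isLastVisit_zero
  have hrecent : recentLastVisit k ρ i < k := (recentLastVisit_le k ρ i).trans_lt hi
  refine ⟨⟨Set.mem_image_of_mem ρ hrecent.le, fun hlast => ?_⟩,
    ⟨Set.mem_image_of_mem ρ hi, fun hfirst => ?_⟩⟩
  · exact hrecent.not_ge ((isLastVisit_recentLastVisit h0 i).2 ⟨le_rfl, hlast.symm⟩)
  · exact i.succ_pos.not_ge (h0.2 ⟨hi, hfirst⟩)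

theorem length_le (h : IsShortestLastVisits E R k ρ) :
    k ≤ ((ρ '' Set.Iic k).ncard - 1) ^ 2 := by
  have hfin : (ρ '' Set.Iic k).Finite := (Set.finite_Iic k).image ρ
  calc
    k = (Set.Iio k).ncard := by simp
    _ ≤ ((ρ '' Set.Iic k \ {ρ k}) ×ˢ (ρ '' Set.Iic k \ {ρ 0})).ncard :=
      Set.ncard_le_ncard_of_injOn _ h.mapsTo_recentLastVisit_next h.injOn_recentLastVisit_next
        (hfin.sdiff.prod hfin.sdiff)
    _ = ((ρ '' Set.Iic k).ncard - 1) ^ 2 := by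
      rw [Set.ncard_prod,
        Set.ncard_sdiff_singleton_of_mem (Set.mem_image_of_mem ρ Set.self_mem_Iic),
        Set.ncard_sdiff_singleton_of_mem (Set.mem_image_of_mem ρ (Set.mem_Iic.mpr k.zero_le)), sq]

end IsShortestLastVisits

theorem lastVisits_short_path_general (E : V → V → Prop) (R : Set (V × V))
    (h : ∃ (k : ℕ) (ρ : ℕ → V), IsPath E k ρ ∧ LastVisits R k ρ) :
    ∃ (k : ℕ) (ρ : ℕ → V), k ≤ ((ρ '' Set.Iic k).ncard - 1) ^ 2 ∧
      IsPath E k ρ ∧ LastVisits R k ρ := by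
  obtain ⟨k, ρ, hρ⟩ := exists_isShortestLastVisits h
  exact ⟨k, ρ, hρ.length_le, hρ.isPath, hρ.lastVisits⟩

end

theorem lastVisits_short_path {V : Type*} [Fintype V] (E : V → V → Prop)
    (R : Set (V × V))
    (h : ∃ (k : ℕ) (ρ : ℕ → V), IsPath E k ρ ∧ LastVisits R k ρ) :
    ∃ (k : ℕ) (ρ : ℕ → V), k ≤ (Fintype.card V - 1) ^ 2 ∧
      IsPath E k ρ ∧ LastVisits R k ρ := by
  obtain ⟨k, ρ, hk, hρ⟩ := lastVisits_short_path_general E R h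
  have hcard : (ρ '' Set.Iic k).ncard ≤ Fintype.card V :=
    (Set.ncard_le_card _).trans_eq Nat.card_eq_fintype_card
  exact ⟨k, ρ, hk.trans (by gcongr), hρ⟩
end

section
/- Let G = (V, E) be a finite strongly connected digraph and R ⊆ V × V. Let A = (V, Σ, δ) be a complete DFA with state set V such that (i) for every q ∈ V and a ∈ Σ, either (q, δ(q, a)) ∈ E or δ(q, a) = q; (ii) for every edge (u, v) ∈ E there exists a ∈ Σ with δ(u, a) = v; and (iii) A is synchronizing. Then G contains a path satisfying the Last-Visits conditions for R if and only if there exists a word w ∈ Σ* that synchronizes A and satisfies R ⊆ ℛ^{ℓ<ℓ}_p(w). -/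
/-- Extension of the transition function `δ` to words. -/
def dStar {Q A : Type*} (δ : Q → A → Q) (q : Q) (w : List A) : Q :=
  w.foldl δ q

/-- A word `w` synchronizes the complete DFA with transition function `δ`:
it maps every state to one particular state. -/
def Synchronizes {Q A : Type*} (δ : Q → A → Q) (w : List A) : Prop :=
  ∃ q0 : Q, ∀ q : Q, dStar δ q w = q0

/-- `last(p, w, {r})`: the largest `i ≤ |w|` such that the path labeled by `w`
starting at `r` visits `p` at position `i`, or `⊥ = -∞` if there is none. -/
def lastVisit {Q A : Type*} [DecidableEq Q] (δ : Q → A → Q) (w : List A)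
    (r p : Q) : WithBot ℕ :=
  ((Finset.range (w.length + 1)).filter (fun i => dStar δ r (w.take i) = p)).max

/-- The traversal relation `ℛ^{ℓ<ℓ}_p(w)` ("ℓ < ℓ on paths"). -/
def RelLtLtPaths {Q A : Type*} [DecidableEq Q] (δ : Q → A → Q) (w : List A) :
    Set (Q × Q) :=
  {pq | pq.1 ≠ pq.2 ∧ ∀ r : Q, lastVisit δ w r pq.1 < lastVisit δ w r pq.2}

/-!
Write the trajectory of `w` from `r` as the sequence of states visited while reading `w`. Then
`R ⊆ RelLtLtPaths δ w` says exactly that every trajectory of `w` satisfies the Last-Visits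
conditions.

Given a path satisfying them, first synchronize to its initial vertex and then read off letters
following the path: every trajectory ends with the given path, and what happens before a suffix
satisfying the Last-Visits conditions is irrelevant.

Conversely, a trajectory is a path except that it may pause. Erasing the pauses preserves the order
of visits to distinct vertices.
-/

section Sequences

variable {V : Type*} {E : V → V → Prop} {R : Set (V × V)} {σ ρ : ℕ → V} {k m N : ℕ}

theorem LastVisits.fst_ne_snd (h : LastVisits R k ρ) {e : V × V} (he : e ∈ R) : e.1 ≠ e.2 := by
  classical
  intro heq
  obtain ⟨⟨j, hj, hρj⟩, hlater⟩ := h e he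
  -- Otherwise a last visit to the common vertex would be followed by another one.
  let last := Nat.findGreatest (fun i => ρ i = e.2) k
  have hlast : ρ last = e.2 := Nat.findGreatest_spec (P := fun i => ρ i = e.2) hj hρj
  obtain ⟨i, hi, hlt, hρi⟩ := hlater last (Nat.findGreatest_le k) (hlast.trans heq.symm)
  exact Nat.findGreatest_is_greatest hlt hi hρi

theorem LastVisits.of_suffix (h : LastVisits R k ρ) (hσ : ∀ i ≤ k, σ (m + i) = ρ i) :
    LastVisits R (m + k) σ := by
  intro e he
  obtain ⟨⟨j, hj, hρj⟩, hlater⟩ := h e he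
  refine ⟨⟨m + j, by lia, (hσ j hj).trans hρj⟩, fun i hi hσi => ?_⟩
  rcases lt_or_ge i m with him | hmi
  · exact ⟨m + j, by lia, by lia, (hσ j hj).trans hρj⟩
  · obtain ⟨i, rfl⟩ := Nat.exists_eq_add_of_le hmi
    obtain ⟨j', hj', hij', hρj'⟩ := hlater i (by lia) ((hσ i (by lia)).symm.trans hσi)
    exact ⟨m + j', by lia, by lia, (hσ j' hj').trans hρj'⟩

theorem LastVisits.of_comp {f : ℕ → ℕ} (h : LastVisits R N (ρ ∘ f)) (hf : Monotone f)
    (hsurj : Set.SurjOn f (Set.Iic N) (Set.Iic (f N))) : LastVisits R (f N) ρ := by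
  intro e he
  obtain ⟨⟨j, hj, hρj⟩, hlater⟩ := h e he
  refine ⟨⟨f j, hf hj, hρj⟩, fun m hm hρm => ?_⟩
  obtain ⟨i, hi, rfl⟩ := hsurj hm
  obtain ⟨j', hj', hij', hρj'⟩ := hlater i hi hρm
  have hne : f i ≠ f j' := fun heq =>
    h.fst_ne_snd he (hρm.symm.trans ((congrArg ρ heq).trans hρj'))
  exact ⟨f j', hf hj', (hf hij'.le).lt_of_ne hne, hρj'⟩

/-- The number of times `i < n` at which the sequence `σ` moves, that is, `σ (i + 1) ≠ σ i`. It is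
the time change that erases the pauses of `σ`. -/
def moveCount [DecidableEq V] (σ : ℕ → V) (n : ℕ) : ℕ :=
  Nat.count (fun i => σ (i + 1) ≠ σ i) n

theorem moveCount_monotone [DecidableEq V] (σ : ℕ → V) : Monotone (moveCount σ) :=
  Nat.count_monotone _

theorem factorsThrough_moveCount [DecidableEq V] (σ : ℕ → V) :
    σ.FactorsThrough (moveCount σ) := by
  have hconst : ∀ i j, i ≤ j → moveCount σ i = moveCount σ j → σ i = σ j := by
    intro i j hij
    induction j, hij using Nat.le_induction with
    | base => exact fun _ => rfl
    | succ j hij ih =>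
      intro hcount
      have hj : moveCount σ i = moveCount σ j :=
        (moveCount_monotone σ hij).antisymm
          ((moveCount_monotone σ j.le_succ).trans hcount.ge)
      have hpause : σ (j + 1) = σ j := by
        by_contra hmove
        exact (Nat.count_strict_mono hmove j.lt_succ_self).ne (hj.symm.trans hcount)
      exact (ih hj).trans hpause.symm
  intro i j hcount
  rcases le_total i j with hij | hji
  · exact hconst i j hij hcount
  · exact (hconst j i hji hcount.symm).symm

theorem exists_move_of_lt_moveCount [DecidableEq V] (hm : m < moveCount σ N) :
    ∃ i < N, σ (i + 1) ≠ σ i ∧ moveCount σ i = m ∧ moveCount σ (i + 1) = m + 1 := by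
  let moves : ℕ → Prop := fun i => σ (i + 1) ≠ σ i
  have hcard (hfin : (Set.ofPred moves).Finite) : m < hfin.toFinset.card :=
    hm.trans_le (Nat.count_le_card hfin N)
  have hcount : moveCount σ (Nat.nth moves m) = m := Nat.count_nth hcard
  have hmove : moves (Nat.nth moves m) := Nat.nth_mem m hcard
  exact ⟨_, Nat.nth_lt_of_lt_count hm, hmove, hcount,
    (Nat.count_succ_eq_succ_count hmove).trans (congrArg _ hcount)⟩

theorem surjOn_moveCount [DecidableEq V] (σ : ℕ → V) (N : ℕ) :
    Set.SurjOn (moveCount σ) (Set.Iic N) (Set.Iic (moveCount σ N)) := by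
  intro m hm
  rcases (Set.mem_Iic.1 hm).lt_or_eq with hlt | rfl
  · obtain ⟨i, hi, -, hcount, -⟩ := exists_move_of_lt_moveCount hlt
    exact ⟨i, hi.le, hcount⟩
  · exact ⟨N, Set.self_mem_Iic, rfl⟩

theorem LastVisits.exists_isPath (h : LastVisits R N σ)
    (hσ : ∀ i < N, E (σ i) (σ (i + 1)) ∨ σ (i + 1) = σ i) :
    ∃ (k : ℕ) (ρ : ℕ → V), IsPath E k ρ ∧ LastVisits R k ρ := by
  classical
  obtain ⟨ρ, hρ⟩ : ∃ ρ : ℕ → V, σ = ρ ∘ moveCount σ :=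
    ⟨Function.extend (moveCount σ) σ σ,
      funext fun i => ((factorsThrough_moveCount σ).extend_apply σ i).symm⟩
  refine ⟨moveCount σ N, ρ, fun m hm => ?_,
    (hρ ▸ h : LastVisits R N (ρ ∘ moveCount σ)).of_comp
      (moveCount_monotone σ) (surjOn_moveCount σ N)⟩
  obtain ⟨i, hi, hmove, hcount, hcount_succ⟩ := exists_move_of_lt_moveCount hm
  have hedge : E (σ i) (σ (i + 1)) := (hσ i hi).resolve_right hmove
  rwa [congrFun hρ i, congrFun hρ (i + 1), Function.comp_apply, Function.comp_apply, hcount,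
    hcount_succ] at hedge

end Sequences

theorem finset_max_lt_max_iff {α : Type*} [LinearOrder α] {s t : Finset α} :
    s.max < t.max ↔ t.Nonempty ∧ ∀ a ∈ s, ∃ b ∈ t, a < b := by
  have hmax (ht : t.Nonempty) : s.max < t.max ↔ ∀ a ∈ s, ∃ b ∈ t, a < b := by
    have hbot : ⊥ < t.max := bot_lt_iff_ne_bot.2 (Finset.max_eq_bot.not.2 ht.ne_empty)
    simp only [Finset.max_eq_sup_withBot s, Finset.sup_lt_iff hbot]
    simp only [Finset.max_eq_sup_withBot, Finset.lt_sup_iff, WithBot.coe_lt_coe]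
  refine ⟨fun h => ?_, fun h => (hmax h.1).2 h.2⟩
  have ht : t.Nonempty := Finset.nonempty_iff_ne_empty.2 (Finset.max_eq_bot.not.1 h.ne_bot)
  exact ⟨ht, (hmax ht).1 h⟩

section Automata

variable {Q A : Type*} {E : Q → Q → Prop} {δ : Q → A → Q}

theorem dStar_append (δ : Q → A → Q) (q : Q) (u v : List A) :
    dStar δ q (u ++ v) = dStar δ (dStar δ q u) v :=
  List.foldl_append

/-- The sequence of states visited from `r` while reading `w`; it is constant from time `w.length`
on. -/
def trajectory (δ : Q → A → Q) (w : List A) (r : Q) (i : ℕ) : Q :=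
  dStar δ r (w.take i)

theorem trajectory_succ (δ : Q → A → Q) {w : List A} (r : Q) {i : ℕ} (hi : i < w.length) :
    trajectory δ w r (i + 1) = δ (trajectory δ w r i) w[i] := by
  rw [trajectory, List.take_succ_eq_append_getElem hi, dStar_append]
  rfl

theorem trajectory_append_length_add (δ : Q → A → Q) (u v : List A) (r : Q) (i : ℕ) :
    trajectory δ (u ++ v) r (u.length + i) = trajectory δ v (dStar δ r u) i := by
  rw [trajectory, List.take_length_add_append, dStar_append]
  rfl

theorem lastVisit_lt_lastVisit_iff [DecidableEq Q] {w : List A} {r p q : Q} :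
    lastVisit δ w r p < lastVisit δ w r q ↔
      LastVisits {(p, q)} w.length (trajectory δ w r) := by
  simp only [lastVisit, finset_max_lt_max_iff, LastVisits, trajectory, Finset.Nonempty,
    Finset.mem_filter, Finset.mem_range, Nat.lt_succ_iff, and_imp, and_comm, and_left_comm,
    Set.mem_singleton_iff, forall_eq]

theorem subset_relLtLtPaths_iff [DecidableEq Q] [Nonempty Q] {R : Set (Q × Q)} {w : List A} :
    R ⊆ RelLtLtPaths δ w ↔ ∀ r, LastVisits R w.length (trajectory δ w r) := by
  constructor
  · intro hR r e he
    exact lastVisit_lt_lastVisit_iff.1 ((hR he).2 r) e rfl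
  · intro h e he
    refine ⟨(h (Classical.arbitrary Q)).fst_ne_snd he, fun r => lastVisit_lt_lastVisit_iff.2 ?_⟩
    rintro _ rfl
    exact h r e he

theorem exists_dStar_eq_of_reflTransGen (hE : ∀ u v, E u v → ∃ a, δ u a = v) {u v : Q}
    (huv : Relation.ReflTransGen E u v) : ∃ w, dStar δ u w = v := by
  induction huv with
  | refl => exact ⟨[], rfl⟩
  | tail _ hedge ih =>
    obtain ⟨w, rfl⟩ := ih
    obtain ⟨a, rfl⟩ := hE _ _ hedge
    exact ⟨w ++ [a], dStar_append δ u w [a]⟩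

theorem Synchronizes.exists_forall_dStar_eq {w : List A} (hw : Synchronizes δ w)
    (hE : ∀ u v, E u v → ∃ a, δ u a = v) (hSC : ∀ u v, Relation.ReflTransGen E u v) (q : Q) :
    ∃ w', ∀ r, dStar δ r w' = q := by
  obtain ⟨q₀, hq₀⟩ := hw
  obtain ⟨u, hu⟩ := exists_dStar_eq_of_reflTransGen hE (hSC q₀ q)
  exact ⟨w ++ u, fun r => by rw [dStar_append, hq₀, hu]⟩

theorem IsPath.exists_trajectory_eq {k : ℕ} {ρ : ℕ → Q} (h : IsPath E k ρ)
    (hE : ∀ u v, E u v → ∃ a, δ u a = v) :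
    ∃ w : List A, w.length = k ∧ ∀ i ≤ k, trajectory δ w (ρ 0) i = ρ i := by
  obtain ⟨w, hlen, hstep⟩ :
      ∃ w : List A, w.length = k ∧ ∀ i (hi : i < w.length), δ (ρ i) w[i] = ρ (i + 1) := by
    choose letter hletter using fun i : Fin k => hE _ _ (h i i.2)
    exact ⟨List.ofFn letter, List.length_ofFn, fun i hi => by
      simpa only [List.getElem_ofFn] using hletter ⟨i, hi.trans_eq List.length_ofFn⟩⟩
  refine ⟨w, hlen, fun i hi => ?_⟩
  induction i with
  | zero => rfl
  | succ i ih => rw [trajectory_succ δ _ (by lia), ih (by lia), hstep]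

end Automata

theorem lastVisitsTraversal_iff_constrainedSync_general {V A : Type*} [DecidableEq V]
    (E : V → V → Prop) (R : Set (V × V))
    (hSC : ∀ u v : V, Relation.ReflTransGen E u v)
    (δ : V → A → V)
    (h1 : ∀ (q : V) (a : A), E q (δ q a) ∨ δ q a = q)
    (h2 : ∀ u v : V, E u v → ∃ a : A, δ u a = v)
    (h3 : ∃ w : List A, Synchronizes δ w) :
    (∃ (k : ℕ) (ρ : ℕ → V), IsPath E k ρ ∧ LastVisits R k ρ) ↔
    (∃ w : List A, Synchronizes δ w ∧ R ⊆ RelLtLtPaths δ w) := by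
  obtain ⟨s, hs⟩ := h3
  have : Nonempty V := ⟨hs.choose⟩
  simp only [subset_relLtLtPaths_iff]
  constructor
  · rintro ⟨k, ρ, hpath, hvisits⟩
    obtain ⟨u, hu⟩ := hs.exists_forall_dStar_eq h2 hSC (ρ 0)
    obtain ⟨v, rfl, hv⟩ := hpath.exists_trajectory_eq h2
    refine ⟨u ++ v, ⟨dStar δ (ρ 0) v, fun r => by rw [dStar_append, hu]⟩, fun r => ?_⟩
    rw [List.length_append]
    exact hvisits.of_suffix fun i hi => by rw [trajectory_append_length_add, hu, hv i hi]
  · rintro ⟨w, ⟨q₀, -⟩, hvisits⟩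
    refine (hvisits q₀).exists_isPath fun i hi => ?_
    rw [trajectory_succ δ q₀ hi]
    exact h1 _ _

theorem lastVisitsTraversal_iff_constrainedSync {V A : Type*} [Fintype V]
    [DecidableEq V] [Fintype A]
    (E : V → V → Prop) (R : Set (V × V))
    (hSC : ∀ u v : V, Relation.ReflTransGen E u v)
    (δ : V → A → V)
    (h1 : ∀ (q : V) (a : A), E q (δ q a) ∨ δ q a = q)
    (h2 : ∀ u v : V, E u v → ∃ a : A, δ u a = v)
    (h3 : ∃ w : List A, Synchronizes δ w) :
    (∃ (k : ℕ) (ρ : ℕ → V), IsPath E k ρ ∧ LastVisits R k ρ) ↔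
    (∃ w : List A, Synchronizes δ w ∧ R ⊆ RelLtLtPaths δ w) :=
  lastVisitsTraversal_iff_constrainedSync_general E R hSC δ h1 h2 h3
end

section
/- Let A = (Q, Σ, δ) be a partial DFA with |Q| ≥ 2, fix a state t ∈ Q, and let q⊖, r be two distinct fresh states not in Q. Define the complete DFA A' = (Q ∪ {q⊖, r}, Σ, δ') by: δ'(q, a) = δ(q, a) for q ∈ Q and a ∈ Σ whenever δ(q, a) is defined; δ'(q, a) = q⊖ for q ∈ Q and a ∈ Σ whenever δ(q, a) is undefined; and δ'(q⊖, a) = δ'(r, a) = δ'(t, a) for every a ∈ Σ (that is, both equal δ(t, a) if it is defined and q⊖ otherwise). Then for every word w ∈ Σ*: w carefully synchronizes A if and only if w synchronizes A' and (q⊖, r) ∈ ℛ^{ℓ≤ℓ}(w) with respect to A'. -/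
/-- Extension of the partial transition function `δ` to words. -/
def pStar {Q A : Type*} (δ : Q → A → Option Q) (q : Q) (w : List A) : Option Q :=
  w.foldl (fun o a => o.bind fun p => δ p a) (some q)

/-- A word `w` carefully synchronizes the partial DFA `δ`. -/
def CarefullySync {Q A : Type*} (δ : Q → A → Option Q) (w : List A) : Prop :=
  ∃ q0 : Q, ∀ q : Q, pStar δ q w = some q0

/-- `last(p, w, Q)`: the largest `i ≤ |w|` with `p ∈ δ(Q, w[1..i])`,
or `⊥ = -∞` if there is none. -/
def lastVisitSet {Q A : Type*} [Fintype Q] [DecidableEq Q] (δ : Q → A → Q)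
    (w : List A) (p : Q) : WithBot ℕ :=
  ((Finset.range (w.length + 1)).filter
    (fun i => ∃ q : Q, dStar δ q (w.take i) = p)).max

/-- The traversal relation `ℛ^{ℓ≤ℓ}(w)` ("ℓ ≤ ℓ on sets"). -/
def RelLeLeSets {Q A : Type*} [Fintype Q] [DecidableEq Q] (δ : Q → A → Q)
    (w : List A) : Set (Q × Q) :=
  {pq | pq.1 ≠ pq.2 ∧ lastVisitSet δ w pq.1 ≤ lastVisitSet δ w pq.2}

/-- The completion `A'` of the partial DFA `δ`: states are `Q ⊕ Bool`, where
`Sum.inr false` is the fresh state `q⊖` and `Sum.inr true` is the fresh state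
`r`. Undefined transitions from `Q` go to `q⊖`, and from `q⊖` and `r` every
letter acts as it acts from the fixed state `t`. -/
def extDelta {Q A : Type*} (δ : Q → A → Option Q) (t : Q) :
    Q ⊕ Bool → A → Q ⊕ Bool :=
  fun s a =>
    match s with
    | Sum.inl q => (δ q a).elim (Sum.inr false) Sum.inl
    | Sum.inr _ => (δ t a).elim (Sum.inr false) Sum.inl

/-!
A run of the completion `A'` that starts in `Q` follows the partial run as long as the latter is
defined, and enters the sink `q⊖` at the first undefined transition. Hence `w` carefully
synchronizes `A` iff it brings all of `Q` to one state and no run of `A'` on `w` enters `q⊖`; the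
runs from `q⊖` and `r` add nothing, since their first step is that of `t`. Nothing ever enters `r`,
so `r` is last visited at time `0`, and `(q⊖, r) ∈ ℛ^{ℓ≤ℓ}(w)` says exactly that `q⊖` is not
entered either.
-/

section Complete

variable {Q A : Type*} (δ : Q → A → Q)

@[simp]
theorem dStar_nil (q : Q) : dStar δ q [] = q := rfl

@[simp]
theorem dStar_cons (q : Q) (a : A) (w : List A) : dStar δ q (a :: w) = dStar δ (δ q a) w := rfl

variable {δ} in
theorem dStar_eq_of_eq {q q' : Q} (h : δ q = δ q') {w : List A} (hw : w ≠ []) :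
    dStar δ q w = dStar δ q' w := by
  obtain ⟨a, w, rfl⟩ := List.exists_cons_of_ne_nil hw
  simp only [dStar_cons, h]

/-- The run from `q` on `w` enters the state `p` by some transition. The start of the run does not
count as entering, so only nonempty prefixes of `w` are considered. -/
def Enters (q : Q) (w : List A) (p : Q) : Prop :=
  ∃ u, u <+: w ∧ u ≠ [] ∧ dStar δ q u = p

@[simp]
theorem not_enters_nil (q p : Q) : ¬Enters δ q [] p := by
  simp [Enters]

theorem enters_cons (q : Q) (a : A) (w : List A) (p : Q) :
    Enters δ q (a :: w) p ↔ δ q a = p ∨ Enters δ (δ q a) w p := by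
  constructor
  · rintro ⟨u, hu, hne, rfl⟩
    obtain ⟨b, v, rfl⟩ := List.exists_cons_of_ne_nil hne
    obtain ⟨rfl, hv⟩ := List.cons_prefix_cons.mp hu
    rcases eq_or_ne v [] with rfl | hv'
    · exact .inl rfl
    · exact .inr ⟨v, hv, hv', rfl⟩
  · rintro (rfl | ⟨v, hv, -, rfl⟩)
    · exact ⟨[a], by simp, by simp, rfl⟩
    · exact ⟨a :: v, by simpa using hv, by simp, rfl⟩

variable {δ}

theorem enters_congr {q q' : Q} (h : δ q = δ q') (w : List A) (p : Q) :
    Enters δ q w p ↔ Enters δ q' w p := by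
  cases w with
  | nil => simp only [not_enters_nil]
  | cons a w => simp only [enters_cons, h]

theorem not_enters_of_forall_ne {p : Q} (hp : ∀ q a, δ q a ≠ p) (q : Q) (w : List A) :
    ¬Enters δ q w p := by
  induction w generalizing q with
  | nil => exact not_enters_nil δ q p
  | cons a w ih => exact fun h => ((enters_cons δ q a w p).mp h).elim (hp q a) (ih _)

variable [Fintype Q] [DecidableEq Q]

theorem lastVisitSet_le_coe_iff {w : List A} {p : Q} {n : ℕ} :
    lastVisitSet δ w p ≤ n ↔ ∀ q u, u <+: w → dStar δ q u = p → u.length ≤ n := by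
  simp only [lastVisitSet, Finset.max_le_iff, Finset.mem_filter, Finset.mem_range]
  constructor
  · intro h q u hu hq
    have hlen : u.length < w.length + 1 := Nat.lt_succ_of_le hu.length_le
    exact WithBot.coe_le_coe.mp <| h _ ⟨hlen, q, by rwa [← List.prefix_iff_eq_take.mp hu]⟩
  · rintro h i ⟨hi, q, hq⟩
    have hle := h q _ (List.take_prefix i w) hq
    rw [List.length_take_of_le (Nat.le_of_lt_succ hi)] at hle
    exact WithBot.coe_le_coe.mpr hle

theorem lastVisitSet_le_zero_iff {w : List A} {p : Q} :
    lastVisitSet δ w p ≤ 0 ↔ ∀ q, ¬Enters δ q w p := by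
  rw [← Nat.cast_zero, lastVisitSet_le_coe_iff]
  simp only [Enters, Nat.le_zero, List.length_eq_zero_iff]
  grind

variable (δ) in
theorem zero_le_lastVisitSet (w : List A) (p : Q) : 0 ≤ lastVisitSet δ w p :=
  Finset.le_max (Finset.mem_filter.mpr ⟨by simp, p, rfl⟩)

theorem mem_relLeLeSets_iff_of_forall_ne {p r : Q} (hr : ∀ q a, δ q a ≠ r) {w : List A} :
    (p, r) ∈ RelLeLeSets δ w ↔ p ≠ r ∧ ∀ q, ¬Enters δ q w p := by
  have hlast : lastVisitSet δ w r = 0 :=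
    (lastVisitSet_le_zero_iff.mpr fun q => not_enters_of_forall_ne hr q w).antisymm
      (zero_le_lastVisitSet δ w r)
  simp only [RelLeLeSets, Set.mem_ofPred_eq, hlast, lastVisitSet_le_zero_iff]

end Complete

section Partial

variable {Q A : Type*} (δ : Q → A → Option Q)

@[simp]
theorem pStar_nil (q : Q) : pStar δ q [] = some q := rfl

theorem pStar_cons (q : Q) (a : A) (w : List A) :
    pStar δ q (a :: w) = (δ q a).bind fun p => pStar δ p w := by
  have foldl_none : w.foldl (fun o b => o.bind fun p => δ p b) none = none := by
    induction w with
    | nil => rfl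
    | cons _ _ ih => exact ih
  cases h : δ q a with
  | none => simp only [pStar, List.foldl_cons, Option.bind_some, h, foldl_none, Option.bind_none]
  | some p => simp only [pStar, List.foldl_cons, Option.bind_some, h]

variable {δ} in
theorem CarefullySync.ne_nil [Nontrivial Q] {w : List A} (h : CarefullySync δ w) : w ≠ [] := by
  rintro rfl
  obtain ⟨p, hp⟩ := h
  obtain ⟨q, hq⟩ := exists_ne p
  exact hq (Option.some.inj (hp q))

variable (t : Q)

theorem extDelta_inr (b : Bool) : extDelta δ t (.inr b) = extDelta δ t (.inl t) := rfl

theorem extDelta_ne_inr_true (s : Q ⊕ Bool) (a : A) : extDelta δ t s a ≠ .inr true := by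
  have hinl (q : Q) : extDelta δ t (.inl q) a ≠ .inr true := by
    cases h : δ q a <;> simp [extDelta, h]
  cases s with
  | inl q => exact hinl q
  | inr b => exact hinl t

theorem pStar_eq_some_iff {q p : Q} {w : List A} :
    pStar δ q w = some p ↔
      dStar (extDelta δ t) (.inl q) w = .inl p ∧
        ¬Enters (extDelta δ t) (.inl q) w (.inr false) := by
  induction w generalizing q with
  | nil => simp
  | cons a w ih =>
    cases h : δ q a with
    | none =>
      have hstep : extDelta δ t (.inl q) a = .inr false := by simp [extDelta, h]
      simp [pStar_cons, enters_cons, h, hstep]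
    | some q' =>
      have hstep : extDelta δ t (.inl q) a = .inl q' := by simp [extDelta, h]
      simp [pStar_cons, enters_cons, h, hstep, ih]

theorem carefullySync_iff_dStar_extDelta {w : List A} :
    CarefullySync δ w ↔
      (∃ p, ∀ q, dStar (extDelta δ t) (.inl q) w = .inl p) ∧
        ∀ q, ¬Enters (extDelta δ t) (.inl q) w (.inr false) := by
  simp only [CarefullySync, pStar_eq_some_iff δ t, forall_and, exists_and_right]

theorem forall_not_enters_extDelta_iff {w : List A} {p : Q ⊕ Bool} :
    (∀ s, ¬Enters (extDelta δ t) s w p) ↔ ∀ q, ¬Enters (extDelta δ t) (.inl q) w p := by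
  simp only [Sum.forall, enters_congr (extDelta_inr δ t _), and_iff_left_iff_imp]
  exact fun h _ => h t

variable {δ t}

theorem synchronizes_extDelta_of_forall_inl {w : List A} (hw : w ≠ []) {p : Q ⊕ Bool}
    (h : ∀ q, dStar (extDelta δ t) (.inl q) w = p) : Synchronizes (extDelta δ t) w :=
  ⟨p, Sum.rec h fun b => (dStar_eq_of_eq (extDelta_inr δ t b) hw).trans (h t)⟩

theorem exists_dStar_extDelta_eq_inl {q : Q} {w : List A}
    (h : ¬Enters (extDelta δ t) (.inl q) w (.inr false)) :
    ∃ p, dStar (extDelta δ t) (.inl q) w = .inl p := by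
  rcases eq_or_ne w [] with rfl | hw
  · exact ⟨q, rfl⟩
  · rcases hs : dStar (extDelta δ t) (.inl q) w with p | _ | _
    · exact ⟨p, rfl⟩
    · exact absurd ⟨w, List.prefix_rfl, hw, hs⟩ h
    · exact absurd ⟨w, List.prefix_rfl, hw, hs⟩
        (not_enters_of_forall_ne (extDelta_ne_inr_true δ t) _ w)

end Partial

theorem carefullySync_iff_sync_relLeLeSets {Q A : Type*} [Fintype Q]
    [DecidableEq Q] (hQ : 2 ≤ Fintype.card Q)
    (δ : Q → A → Option Q) (t : Q) (w : List A) :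
    CarefullySync δ w ↔
      Synchronizes (extDelta δ t) w ∧
        ((Sum.inr false, Sum.inr true) : (Q ⊕ Bool) × (Q ⊕ Bool)) ∈
          RelLeLeSets (extDelta δ t) w := by
  have : Nontrivial Q := Fintype.one_lt_card_iff_nontrivial.mp hQ
  rw [mem_relLeLeSets_iff_of_forall_ne (extDelta_ne_inr_true δ t), forall_not_enters_extDelta_iff]
  constructor
  · intro h
    obtain ⟨⟨p, hp⟩, havoid⟩ := (carefullySync_iff_dStar_extDelta δ t).mp h
    exact ⟨synchronizes_extDelta_of_forall_inl h.ne_nil hp, by simp, havoid⟩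
  · rintro ⟨⟨s, hs⟩, -, havoid⟩
    obtain ⟨p, hp⟩ := exists_dStar_extDelta_eq_inl (havoid t)
    exact (carefullySync_iff_dStar_extDelta δ t).mpr
      ⟨⟨p, fun q => (hs _).trans ((hs _).symm.trans hp)⟩, havoid⟩
end
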